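/- If the probability density f on ℝ^m has finite second moment M = ∫ xᵀx f(x) dx < ∞, then φ(σ) = O(σ^{-3}): for every σ > 0, σ³·φ(σ) ≤ 4·λ_max(A⁻¹)·M, where λ_max(A⁻¹) denotes the largest eigenvalue of A⁻¹. -/

import Mathlib

open MeasureTheory Real Matrix

/-- The density of the multivariate normal distribution with mean `x` and covariance `σ² A`. -/
noncomputable def gaussDensity (m : ℕ) (A : Matrix (Fin m) (Fin m) ℝ)
    (x y : Fin m → ℝ) (σ : ℝ) : ℝ :=
  (2 * π * σ ^ 2) ^ (-(m : ℝ) / 2) * A.det ^ (-(1 : ℝ) / 2) *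
    Real.exp (-((y - x) ⬝ᵥ (A⁻¹).mulVec (y - x)) / (2 * σ ^ 2))

/-- `min{f(y)/f(x), 1}`, with the convention that this equals `1` when `f(x) = 0`. -/
noncomputable def accept {α : Type*} (f : α → ℝ) (x y : α) : ℝ :=
  if f x = 0 then 1 else min (f y / f x) 1

/-!
Multiplying the acceptance probability by `f x` turns it into `min (f x) (f y)`, which is at most
`f x` and at most `f y`. The quadratic form of `A⁻¹` at `y - x` is at most `2 λ (xᵀx + yᵀy)`, where
`λ` is its largest eigenvalue, so the integrand is at most `2 λ (xᵀx f x + yᵀy f y)` times the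
Gaussian density. That density is symmetric in `x` and `y`, hence integrates to `1` in either
variable, and each of the two terms contributes `2 λ M`.
-/

section Acceptance

variable {α : Type*} {f : α → ℝ}

lemma accept_nonneg (hf : ∀ x, 0 ≤ f x) (x y : α) : 0 ≤ accept f x y := by
  unfold accept
  split_ifs
  exacts [zero_le_one, le_min (div_nonneg (hf y) (hf x)) zero_le_one]

lemma accept_mul_eq_min (hf : ∀ x, 0 ≤ f x) (x y : α) :
    accept f x y * f x = min (f x) (f y) := by
  unfold accept
  split_ifs with hx
  · rw [hx, mul_zero, min_eq_left (hf y)]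
  · rw [min_mul_of_nonneg _ _ (hf x), div_mul_cancel₀ _ hx, one_mul, min_comm]

lemma accept_mul_le_add {c : α → α → ℝ} {w : α → ℝ} (hf : ∀ x, 0 ≤ f x) (hc : ∀ x y, 0 ≤ c x y)
    (hcw : ∀ x y, c x y ≤ w x + w y) (x y : α) :
    accept f x y * c x y * f x ≤ w x * f x + w y * f y := by
  have hw (z : α) : 0 ≤ w z := by linarith [hc z z, hcw z z]
  calc accept f x y * c x y * f x = c x y * min (f x) (f y) := by
        rw [← accept_mul_eq_min hf]
        ring
    _ ≤ (w x + w y) * min (f x) (f y) :=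
        mul_le_mul_of_nonneg_right (hcw x y) (le_min (hf x) (hf y))
    _ = w x * min (f x) (f y) + w y * min (f x) (f y) := add_mul _ _ _
    _ ≤ w x * f x + w y * f y :=
        add_le_add (mul_le_mul_of_nonneg_left (min_le_left _ _) (hw x))
          (mul_le_mul_of_nonneg_left (min_le_right _ _) (hw y))

end Acceptance

section TransitionDensity

variable {X : Type*} [MeasurableSpace X] {μ : Measure X} {k : X → X → ℝ}

/-- `k x y` is the density at `y`, with respect to `μ`, of a Markov step started at `x`, and the
step is reversible with respect to `μ`. In the Metropolis algorithm `k` is the proposal density. -/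
structure IsSymmetricTransitionDensity (k : X → X → ℝ) (μ : Measure X) : Prop where
  aestronglyMeasurable : AEStronglyMeasurable (fun p : X × X ↦ k p.1 p.2) (μ.prod μ)
  nonneg : ∀ x y, 0 ≤ k x y
  symm : ∀ x y, k x y = k y x
  integral_eq_one : ∀ x, ∫ y, k x y ∂μ = 1

namespace IsSymmetricTransitionDensity

variable [SFinite μ] {F : X → ℝ}

lemma integrable_fst_mul (hk : IsSymmetricTransitionDensity k μ) (hF : Integrable F μ) :
    Integrable (fun p : X × X ↦ F p.1 * k p.1 p.2) (μ.prod μ) := by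
  have product_measurable : AEStronglyMeasurable (fun p : X × X ↦ F p.1 * k p.1 p.2) (μ.prod μ) :=
    hF.aestronglyMeasurable.comp_fst.mul hk.aestronglyMeasurable
  rw [integrable_prod_iff product_measurable]
  refine ⟨.of_forall fun x ↦
    (integrable_of_integral_eq_one (hk.integral_eq_one x)).const_mul (F x), ?_⟩
  have inner_norm (x : X) : ∫ y, ‖F x * k x y‖ ∂μ = ‖F x‖ := by
    simp_rw [norm_mul, Real.norm_of_nonneg (hk.nonneg _ _), integral_const_mul,
      hk.integral_eq_one, mul_one]
  simpa only [inner_norm] using hF.norm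

lemma integral_fst_mul (hk : IsSymmetricTransitionDensity k μ) (hF : Integrable F μ) :
    ∫ p : X × X, F p.1 * k p.1 p.2 ∂μ.prod μ = ∫ x, F x ∂μ := by
  simp_rw [integral_prod _ (hk.integrable_fst_mul hF), integral_const_mul, hk.integral_eq_one,
    mul_one]

lemma integrable_snd_mul (hk : IsSymmetricTransitionDensity k μ) (hF : Integrable F μ) :
    Integrable (fun p : X × X ↦ F p.2 * k p.1 p.2) (μ.prod μ) := by
  simpa only [Function.comp_def, Prod.fst_swap, Prod.snd_swap, hk.symm] using
    (hk.integrable_fst_mul hF).swap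

lemma integral_snd_mul (hk : IsSymmetricTransitionDensity k μ) (hF : Integrable F μ) :
    ∫ p : X × X, F p.2 * k p.1 p.2 ∂μ.prod μ = ∫ x, F x ∂μ := by
  rw [← hk.integral_fst_mul hF, ← integral_prod_swap]
  simp only [Prod.fst_swap, Prod.snd_swap, hk.symm]

end IsSymmetricTransitionDensity

lemma integral_accept_mul_le [SFinite μ] (hk : IsSymmetricTransitionDensity k μ)
    {f w : X → ℝ} {c : X → X → ℝ} (hf : ∀ x, 0 ≤ f x) (hc : ∀ x y, 0 ≤ c x y)
    (hcw : ∀ x y, c x y ≤ w x + w y) (hwf : Integrable (fun x ↦ w x * f x) μ) :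
    ∫ x, ∫ y, accept f x y * c x y * k x y * f x ∂μ ∂μ ≤ 2 * ∫ x, w x * f x ∂μ := by
  let G (x y : X) : ℝ := w x * f x * k x y + w y * f y * k x y
  have hG : Integrable (fun p : X × X ↦ G p.1 p.2) (μ.prod μ) :=
    (hk.integrable_fst_mul hwf).add (hk.integrable_snd_mul hwf)
  have integral_G : ∫ x, ∫ y, G x y ∂μ ∂μ = 2 * ∫ x, w x * f x ∂μ := by
    rw [← integral_prod _ hG,
      integral_add (hk.integrable_fst_mul hwf) (hk.integrable_snd_mul hwf),
      hk.integral_fst_mul hwf, hk.integral_snd_mul hwf, two_mul]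
  have integrand_nonneg (x y : X) : 0 ≤ accept f x y * c x y * k x y * f x :=
    mul_nonneg (mul_nonneg (mul_nonneg (accept_nonneg hf x y) (hc x y)) (hk.nonneg x y)) (hf x)
  have integrand_le (x y : X) : accept f x y * c x y * k x y * f x ≤ G x y :=
    calc accept f x y * c x y * k x y * f x = accept f x y * c x y * f x * k x y :=
          mul_right_comm _ _ _
      _ ≤ (w x * f x + w y * f y) * k x y :=
          mul_le_mul_of_nonneg_right (accept_mul_le_add hf hc hcw x y) (hk.nonneg x y)
      _ = G x y := add_mul _ _ _
  rw [← integral_G]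
  refine integral_mono_of_nonneg (.of_forall fun x ↦ integral_nonneg (integrand_nonneg x))
    hG.integral_prod_left ?_
  filter_upwards [hG.prod_right_ae] with x hGx
  exact integral_mono_of_nonneg (.of_forall (integrand_nonneg x)) hGx
    (.of_forall (integrand_le x))

end TransitionDensity

section QuadraticForm

variable {ι : Type*} [Fintype ι] {B : Matrix ι ι ℝ}

open scoped MatrixOrder in
lemma dotProduct_mulVec_le_iSup_eigenvalues_mul [DecidableEq ι] (hB : B.IsHermitian) (z : ι → ℝ) :
    z ⬝ᵥ B *ᵥ z ≤ (⨆ i, hB.eigenvalues i) * (z ⬝ᵥ z) := by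
  have B_le : B ≤ algebraMap ℝ (Matrix ι ι ℝ) (⨆ i, hB.eigenvalues i) := by
    rw [le_algebraMap_iff_spectrum_le hB.isSelfAdjoint, hB.spectrum_real_eq_range_eigenvalues]
    exact Set.forall_mem_range.2 fun i ↦ le_ciSup (Set.finite_range _).bddAbove i
  have h := (Matrix.le_iff.1 B_le).dotProduct_mulVec_nonneg z
  rwa [star_trivial, Algebra.algebraMap_eq_smul_one, sub_mulVec, smul_mulVec, one_mulVec,
    dotProduct_sub, dotProduct_smul, smul_eq_mul, sub_nonneg] at h

lemma dotProduct_mulVec_sub_le (hB : B.PosSemidef) (x y : ι → ℝ) :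
    (y - x) ⬝ᵥ B *ᵥ (y - x) ≤ 2 * (x ⬝ᵥ B *ᵥ x) + 2 * (y ⬝ᵥ B *ᵥ y) := by
  have h := hB.dotProduct_mulVec_nonneg (y + x)
  simp only [star_trivial, mulVec_add, mulVec_sub, add_dotProduct, sub_dotProduct, dotProduct_add,
    dotProduct_sub] at h ⊢
  linarith

lemma integral_comp_mulVec [DecidableEq ι] {E : Type*} [NormedAddCommGroup E] [NormedSpace ℝ E]
    (hB : B.det ≠ 0) (h : (ι → ℝ) → E) : ∫ z, h (B *ᵥ z) = |B.det|⁻¹ • ∫ z, h z := by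
  have injective : Function.Injective (toLin' B) :=
    mulVec_injective_iff_isUnit.2 ((isUnit_iff_isUnit_det B).2 hB.isUnit)
  have closed_embedding :=
    LinearMap.isClosedEmbedding_of_injective (LinearMap.ker_eq_bot.2 injective)
  rw [← abs_inv, ← ENNReal.toReal_ofReal (abs_nonneg B.det⁻¹), ← integral_smul_measure,
    ← Real.map_matrix_volume_pi_eq_smul_volume_pi hB,
    closed_embedding.measurableEmbedding.integral_map]
  simp only [toLin'_apply]

lemma integral_exp_neg_dotProduct_self :
    ∫ z : ι → ℝ, exp (-(z ⬝ᵥ z)) = √(π ^ Fintype.card ι) := by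
  have exp_eq_prod (z : ι → ℝ) : exp (-(z ⬝ᵥ z)) = ∏ i, exp (-1 * z i ^ 2) := by
    simp_rw [← exp_sum, ← Finset.mul_sum, neg_one_mul, dotProduct, sq]
  simp_rw [exp_eq_prod]
  rw [integral_fintype_prod_volume_eq_pow fun t : ℝ ↦ exp (-1 * t ^ 2), integral_gaussian, div_one,
    sqrt_eq_rpow, sqrt_eq_rpow, rpow_pow_comm pi_nonneg]

open scoped MatrixOrder in
lemma integral_exp_neg_dotProduct_mulVec [DecidableEq ι] (hB : B.PosDef) :
    ∫ z : ι → ℝ, exp (-(z ⬝ᵥ B *ᵥ z)) = √(π ^ Fintype.card ι / B.det) := by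
  obtain ⟨C, hC⟩ := CStarAlgebra.nonneg_iff_eq_star_mul_self.mp hB.posSemidef.nonneg
  rw [star_eq_conjTranspose, conjTranspose_eq_transpose_of_trivial] at hC
  have form_eq (z : ι → ℝ) : z ⬝ᵥ B *ᵥ z = (C *ᵥ z) ⬝ᵥ (C *ᵥ z) := by
    rw [hC, ← mulVec_mulVec, dotProduct_mulVec, vecMul_transpose]
  have det_eq : B.det = C.det ^ 2 := by rw [hC, det_mul, det_transpose, sq]
  have det_ne_zero : C.det ≠ 0 := by
    have := hB.det_pos.ne'
    rwa [det_eq, pow_ne_zero_iff two_ne_zero] at this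
  simp_rw [form_eq]
  rw [integral_comp_mulVec det_ne_zero fun w ↦ exp (-(w ⬝ᵥ w)), integral_exp_neg_dotProduct_self,
    det_eq, sqrt_div' _ (sq_nonneg _), sqrt_sq_eq_abs, smul_eq_mul, div_eq_inv_mul]

end QuadraticForm

section GaussDensity

variable {m : ℕ} {A : Matrix (Fin m) (Fin m) ℝ} {σ : ℝ}

lemma gaussDensity_nonneg (hA : 0 ≤ A.det) (x y : Fin m → ℝ) :
    0 ≤ gaussDensity m A x y σ := by
  unfold gaussDensity
  positivity

lemma gaussDensity_comm (x y : Fin m → ℝ) :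
    gaussDensity m A x y σ = gaussDensity m A y x σ := by
  unfold gaussDensity
  rw [← neg_sub x y, mulVec_neg, neg_dotProduct_neg]

lemma gaussDensity_eq_gaussDensity_zero (x y : Fin m → ℝ) :
    gaussDensity m A x y σ = gaussDensity m A 0 (y - x) σ := by
  unfold gaussDensity
  rw [sub_zero]

lemma continuous_gaussDensity :
    Continuous fun p : (Fin m → ℝ) × (Fin m → ℝ) ↦ gaussDensity m A p.1 p.2 σ := by
  unfold gaussDensity
  fun_prop

lemma integral_gaussDensity (hA : A.PosDef) (hσ : σ ≠ 0) (x : Fin m → ℝ) :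
    ∫ y, gaussDensity m A x y σ = 1 := by
  have scale_pos : 0 < 2 * σ ^ 2 := by positivity
  have det_pos := hA.det_pos
  have det_eq : ((2 * σ ^ 2)⁻¹ • A⁻¹).det = ((2 * σ ^ 2) ^ m * A.det)⁻¹ := by
    rw [det_smul, Fintype.card_fin, det_nonsing_inv, Ring.inverse_eq_inv', inv_pow, mul_inv]
  have exponent_eq (z : Fin m → ℝ) :
      -(z ⬝ᵥ A⁻¹ *ᵥ z) / (2 * σ ^ 2) = -(z ⬝ᵥ ((2 * σ ^ 2)⁻¹ • A⁻¹) *ᵥ z) := by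
    rw [smul_mulVec, dotProduct_smul, smul_eq_mul, neg_div, div_eq_inv_mul]
  have integral_exp : ∫ z : Fin m → ℝ, exp (-(z ⬝ᵥ A⁻¹ *ᵥ z) / (2 * σ ^ 2)) =
      √((2 * π * σ ^ 2) ^ m * A.det) := by
    simp_rw [exponent_eq]
    rw [integral_exp_neg_dotProduct_mulVec (hA.inv.smul (inv_pos.2 scale_pos)), det_eq,
      Fintype.card_fin, div_inv_eq_mul, ← mul_assoc, ← mul_pow, mul_left_comm, mul_assoc]
  have normalization : (2 * π * σ ^ 2) ^ (-(m : ℝ) / 2) * A.det ^ (-(1 : ℝ) / 2) =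
      (√((2 * π * σ ^ 2) ^ m * A.det))⁻¹ := by
    have base_nonneg : 0 ≤ 2 * π * σ ^ 2 := by positivity
    rw [sqrt_eq_rpow, mul_rpow (pow_nonneg base_nonneg m) det_pos.le,
      ← rpow_natCast_mul base_nonneg, mul_inv, ← rpow_neg base_nonneg,
      ← rpow_neg det_pos.le, mul_one_div, neg_div, neg_div]
  simp_rw [gaussDensity_eq_gaussDensity_zero x]
  rw [integral_sub_right_eq_self fun z ↦ gaussDensity m A 0 z σ]
  simp_rw [gaussDensity, sub_zero, integral_const_mul]
  rw [integral_exp, normalization]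
  exact inv_mul_cancel₀ (by positivity)

lemma isSymmetricTransitionDensity_gaussDensity (hA : A.PosDef) (hσ : σ ≠ 0) :
    IsSymmetricTransitionDensity (fun x y ↦ gaussDensity m A x y σ) volume where
  aestronglyMeasurable := continuous_gaussDensity.aestronglyMeasurable
  nonneg x y := gaussDensity_nonneg hA.det_pos.le x y
  symm x y := gaussDensity_comm x y
  integral_eq_one := integral_gaussDensity hA hσ

end GaussDensity

theorem phi_big_O_general (m : ℕ) (A : Matrix (Fin m) (Fin m) ℝ) (hA : A.PosDef)
    (hH : (A⁻¹).IsHermitian)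
    (f : (Fin m → ℝ) → ℝ) (hf0 : ∀ x, 0 ≤ f x)
    (M : ℝ) (hMdef : M = ∫ x, (x ⬝ᵥ x) * f x)
    (hM : Integrable (fun x : Fin m → ℝ => (x ⬝ᵥ x) * f x))
    (φ : ℝ → ℝ)
    (hφ : ∀ σ : ℝ, φ σ = σ ^ (-3 : ℤ) *
        ∫ x, ∫ y, accept f x y * ((y - x) ⬝ᵥ (A⁻¹).mulVec (y - x)) *
          gaussDensity m A x y σ * f x)
    (σ : ℝ) (hσ : σ ≠ 0) :
    σ ^ 3 * φ σ ≤ 4 * (⨆ i : Fin m, hH.eigenvalues i) * M := by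
  set lam := ⨆ i : Fin m, hH.eigenvalues i
  have form_nonneg (x y : Fin m → ℝ) : 0 ≤ (y - x) ⬝ᵥ A⁻¹ *ᵥ (y - x) :=
    hA.inv.posSemidef.dotProduct_mulVec_nonneg (y - x)
  have form_le (x y : Fin m → ℝ) :
      (y - x) ⬝ᵥ A⁻¹ *ᵥ (y - x) ≤ 2 * lam * (x ⬝ᵥ x) + 2 * lam * (y ⬝ᵥ y) := by
    linarith [dotProduct_mulVec_sub_le hA.inv.posSemidef x y,
      dotProduct_mulVec_le_iSup_eigenvalues_mul hH x,
      dotProduct_mulVec_le_iSup_eigenvalues_mul hH y]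
  have weight_eq (x : Fin m → ℝ) :
      2 * lam * (x ⬝ᵥ x) * f x = 2 * lam * ((x ⬝ᵥ x) * f x) := mul_assoc _ _ _
  calc σ ^ 3 * φ σ
      = ∫ x, ∫ y, accept f x y * ((y - x) ⬝ᵥ A⁻¹ *ᵥ (y - x)) *
          gaussDensity m A x y σ * f x := by
        rw [hφ, _root_.zpow_neg, zpow_ofNat, mul_inv_cancel_left₀ (pow_ne_zero 3 hσ)]
    _ ≤ 2 * ∫ x, 2 * lam * (x ⬝ᵥ x) * f x :=
        integral_accept_mul_le (isSymmetricTransitionDensity_gaussDensity hA hσ) hf0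
          form_nonneg form_le (by simpa only [weight_eq] using hM.const_mul (2 * lam))
    _ = 4 * lam * M := by
        simp_rw [weight_eq, integral_const_mul, ← hMdef]
        ring

/-- If `f` has finite second moment `M = ∫ xᵀx f(x) dx < ∞`, then `φ(σ) = O(σ⁻³)`:
for every `σ > 0`, `σ³ φ(σ) ≤ 4 λ_max(A⁻¹) M`, where `λ_max(A⁻¹)` is the largest
eigenvalue of `A⁻¹`. -/
theorem phi_big_O (m : ℕ) (A : Matrix (Fin m) (Fin m) ℝ) (hA : A.PosDef)
    (hH : (A⁻¹).IsHermitian)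
    (f : (Fin m → ℝ) → ℝ) (hfm : Measurable f) (hf0 : ∀ x, 0 ≤ f x)
    (hf1 : ∫ x, f x = 1)
    -- finite second moment `M`
    (M : ℝ) (hMdef : M = ∫ x, (x ⬝ᵥ x) * f x)
    (hM : Integrable (fun x : Fin m → ℝ => (x ⬝ᵥ x) * f x))
    (φ : ℝ → ℝ)
    (hφ : ∀ σ : ℝ, φ σ = σ ^ (-3 : ℤ) *
        ∫ x, ∫ y, accept f x y * ((y - x) ⬝ᵥ (A⁻¹).mulVec (y - x)) *
          gaussDensity m A x y σ * f x)
    (σ : ℝ) (hσ : 0 < σ) :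
    σ ^ 3 * φ σ ≤ 4 * (⨆ i : Fin m, hH.eigenvalues i) * M :=
  phi_big_O_general m A hA hH f hf0 M hMdef hM φ hφ σ hσ.ne'
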